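/- If M, F, G : [0,∞) → [0,∞) are integrable functions satisfying M(√(rs)) ≥ √(F(r)·G(s)) for all r, s ≥ 0, then ∫_0^∞ M ≥ √(∫_0^∞ F · ∫_0^∞ G). -/

import Mathlib

open MeasureTheory Set

lemma bm_compact (K L D : Set ℝ) (hK : IsCompact K) (hL : IsCompact L) (hKn : K.Nonempty)
    (hLn : L.Nonempty) (hD : ∀ x ∈ K, ∀ y ∈ L, x + y ∈ D) :
    volume K + volume L ≤ volume D := by
  obtain ⟨k, hk, hkm⟩ := hK.exists_isGreatest hKn
  obtain ⟨l, hl, hlm⟩ := hL.exists_isLeast hLn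
  have h1 : volume ((fun x => x + l) '' K) = volume K := by
    simp
  have h2 : volume ((fun x => k + x) '' L) = volume L := by
    simp
  have hm : MeasurableSet ((fun x => k + x) '' L) :=
    (hL.image (by fun_prop)).measurableSet
  have hd : AEDisjoint volume ((fun x => x + l) '' K) ((fun x => k + x) '' L) := by
    refine measure_mono_null (t := {k + l}) ?_ (by simp)
    rintro _ ⟨⟨x, hx, rfl⟩, ⟨y, hy, hxy⟩⟩
    have := hkm hx
    have := hlm hy
    simp only [mem_singleton_iff] at *
    linarith
  rw [← h1, ← h2, ← measure_union₀ hm.nullMeasurableSet hd]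
  apply measure_mono
  rintro _ (⟨x, hx, rfl⟩ | ⟨y, hy, rfl⟩)
  · exact hD _ hx _ hl
  · exact hD _ hk _ hy

open scoped Pointwise in
lemma bm (A B C : Set ℝ) (hA : MeasurableSet A) (hB : MeasurableSet B) (hAn : A.Nonempty)
    (hBn : B.Nonempty) (hC : ∀ x ∈ A, ∀ y ∈ B, (x + y) / 2 ∈ C) :
    volume A + volume B ≤ 2 * volume C := by
  have h2 : volume ((2:ℝ) • C) = 2 * volume C := by
    rw [Measure.addHaar_smul]; simp
  rw [← h2, hA.measure_eq_iSup_isCompact, hB.measure_eq_iSup_isCompact]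
  obtain ⟨a, ha⟩ := hAn
  obtain ⟨b, hb⟩ := hBn
  simp only [iSup_and']
  refine ENNReal.biSup_add_biSup_le' ⟨∅, by simp⟩ ⟨∅, by simp⟩ ?_
  rintro K ⟨hKA, hK⟩ L ⟨hLB, hL⟩
  refine (add_le_add (measure_mono (subset_insert a K)) (measure_mono (subset_insert b L))).trans
    (bm_compact _ _ _ (hK.insert a) (hL.insert b) (insert_nonempty _ _) (insert_nonempty _ _) ?_)
  intro x hx y hy
  refine ⟨(x + y) / 2, hC x (insert_subset ha hKA hx) y (insert_subset hb hLB hy), ?_⟩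
  simp; ring

lemma pl1 (f g m : ℝ → ℝ) (hf : Measurable f) (hg : Measurable g)
    (hf0 : ∀ x, 0 ≤ f x) (hg0 : ∀ x, 0 ≤ g x) (hm0 : ∀ x, 0 ≤ m x)
    (hf1 : ∀ x, f x ≤ 1) (hg1 : ∀ x, g x ≤ 1)
    (hfs : ∀ t < 1, ∃ x, t < f x) (hgs : ∀ t < 1, ∃ x, t < g x)
    (hfi : Integrable f) (hgi : Integrable g) (hmi : Integrable m)
    (h : ∀ x y, f x * g y ≤ m ((x + y) / 2) ^ 2) :
    (∫ x, f x) + ∫ x, g x ≤ 2 * ∫ x, m x := by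
  have key : (∫⁻ x, ENNReal.ofReal (f x)) + ∫⁻ x, ENNReal.ofReal (g x)
      ≤ 2 * ∫⁻ x, ENNReal.ofReal (m x) := by
    rw [lintegral_eq_lintegral_meas_lt _ (.of_forall hf0) hf.aemeasurable,
      lintegral_eq_lintegral_meas_lt _ (.of_forall hg0) hg.aemeasurable,
      lintegral_eq_lintegral_meas_lt _ (.of_forall hm0) hmi.aemeasurable]
    rw [← lintegral_add_left' , ← lintegral_const_mul']
    · refine setLIntegral_mono' measurableSet_Ioi fun t ht => ?_
      rcases lt_or_ge t 1 with h1 | h1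
      · refine bm _ _ _ (measurableSet_lt measurable_const hf)
          (measurableSet_lt measurable_const hg) (hfs t h1) (hgs t h1) ?_
        intro x hx y hy
        simp only [mem_ofPred_eq, mem_Ioi] at *
        refine lt_of_pow_lt_pow_left₀ 2 (hm0 _) (lt_of_lt_of_le ?_ (h x y))
        nlinarith
      · have e1 : {a | t < f a} = ∅ := by
          ext x; simp; exact (hf1 x).trans h1
        have e2 : {a | t < g a} = ∅ := by
          ext x; simp; exact (hg1 x).trans h1
        simp [e1, e2]
    · simp
    · refine Measurable.aemeasurable (Antitone.measurable ?_)
      intro s t hst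
      exact measure_mono fun x hx => lt_of_le_of_lt hst hx
  rw [← ofReal_integral_eq_lintegral_ofReal hfi (.of_forall hf0),
    ← ofReal_integral_eq_lintegral_ofReal hgi (.of_forall hg0),
    ← ofReal_integral_eq_lintegral_ofReal hmi (.of_forall hm0),
    ← ENNReal.ofReal_add (integral_nonneg hf0) (integral_nonneg hg0),
    show (2 : ENNReal) = ENNReal.ofReal 2 by simp, ← ENNReal.ofReal_mul (by norm_num)] at key
  have : 0 ≤ ∫ x, m x := integral_nonneg hm0
  exact (ENNReal.ofReal_le_ofReal_iff (by positivity)).1 key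

lemma pl2 (f g m : ℝ → ℝ) (hf : Measurable f) (hg : Measurable g)
    (hf0 : ∀ x, 0 ≤ f x) (hg0 : ∀ x, 0 ≤ g x) (hm0 : ∀ x, 0 ≤ m x)
    (hfb : BddAbove (range f)) (hgb : BddAbove (range g))
    (hfi : Integrable f) (hgi : Integrable g) (hmi : Integrable m)
    (h : ∀ x y, f x * g y ≤ m ((x + y) / 2) ^ 2) :
    (∫ x, f x) * ∫ x, g x ≤ (∫ x, m x) ^ 2 := by
  set A := ⨆ x, f x with hA
  set B := ⨆ x, g x with hB
  have hfA : ∀ x, f x ≤ A := fun x => le_ciSup hfb x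
  have hgB : ∀ x, g x ≤ B := fun x => le_ciSup hgb x
  rcases (Real.iSup_nonneg hf0).eq_or_lt with hA0 | hA0
  · have : f = 0 := funext fun x => le_antisymm ((hfA x).trans hA0.ge) (hf0 x)
    simp [this]; positivity
  rcases (Real.iSup_nonneg hg0).eq_or_lt with hB0 | hB0
  · have : g = 0 := funext fun x => le_antisymm ((hgB x).trans hB0.ge) (hg0 x)
    simp [this]; positivity
  rw [← hA] at hA0
  rw [← hB] at hB0
  set S := Real.sqrt (A * B) with hS
  have hS0 : 0 < S := by positivity
  have hS2 : S ^ 2 = A * B := Real.sq_sqrt (by positivity)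
  have key := pl1 (fun x => f x / A) (fun x => g x / B) (fun x => m x / S)
    (hf.div_const _) (hg.div_const _)
    (fun x => div_nonneg (hf0 x) hA0.le) (fun x => div_nonneg (hg0 x) hB0.le)
    (fun x => div_nonneg (hm0 x) hS0.le)
    (fun x => (div_le_one hA0).2 (hfA x)) (fun x => (div_le_one hB0).2 (hgB x))
    (fun t ht => by
      obtain ⟨x, hx⟩ := exists_lt_of_lt_ciSup (show t * A < ⨆ x, f x by rw [← hA]; nlinarith)
      exact ⟨x, (lt_div_iff₀ hA0).2 hx⟩)
    (fun t ht => by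
      obtain ⟨x, hx⟩ := exists_lt_of_lt_ciSup (show t * B < ⨆ x, g x by rw [← hB]; nlinarith)
      exact ⟨x, (lt_div_iff₀ hB0).2 hx⟩)
    (hfi.div_const _) (hgi.div_const _) (hmi.div_const _)
    (fun x y => by
      rw [div_mul_div_comm, div_pow, hS2]
      exact div_le_div_of_nonneg_right (h x y) (by positivity))
  simp only [integral_div] at key
  set a := ∫ x, f x
  set b := ∫ x, g x
  set c := ∫ x, m x
  have ha : 0 ≤ a := integral_nonneg hf0
  have hb : 0 ≤ b := integral_nonneg hg0
  have hc : 0 ≤ c := integral_nonneg hm0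
  have h4 : 4 * (a / A * (b / B)) ≤ (2 * (c / S)) ^ 2 := by
    have : 0 ≤ a / A := by positivity
    have : 0 ≤ b / B := by positivity
    nlinarith [sq_nonneg (a / A - b / B)]
  rw [mul_pow, div_pow, hS2, div_mul_div_comm] at h4
  have h5 : a * b / (A * B) ≤ c ^ 2 / (A * B) := by linarith
  exact (div_le_div_iff_of_pos_right (by positivity)).1 h5

lemma pl3 (f g m : ℝ → ℝ) (hf : Measurable f) (hg : Measurable g)
    (hf0 : ∀ x, 0 ≤ f x) (hg0 : ∀ x, 0 ≤ g x) (hm0 : ∀ x, 0 ≤ m x)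
    (hfi : Integrable f) (hgi : Integrable g) (hmi : Integrable m)
    (h : ∀ x y, f x * g y ≤ m ((x + y) / 2) ^ 2) :
    (∫ x, f x) * ∫ x, g x ≤ (∫ x, m x) ^ 2 := by
  have bnd : ∀ f : ℝ → ℝ, (∀ x, 0 ≤ f x) → ∀ n : ℕ, ∀ x, ‖min (f x) n‖ ≤ f x := by
    intro f hf0 n x
    rw [Real.norm_of_nonneg (le_min (hf0 x) (by positivity))]
    exact min_le_left _ _
  have ti : ∀ f : ℝ → ℝ, Measurable f → (∀ x, 0 ≤ f x) → Integrable f → ∀ n : ℕ,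
      Integrable (fun x => min (f x) (n:ℝ)) := by
    intro f hf hf0 hfi n
    exact hfi.mono' (by fun_prop) (.of_forall (bnd f hf0 n))
  have lim : ∀ f : ℝ → ℝ, Measurable f → (∀ x, 0 ≤ f x) → Integrable f →
      Filter.Tendsto (fun n : ℕ => ∫ x, min (f x) (n:ℝ)) Filter.atTop (nhds (∫ x, f x)) := by
    intro f hf hf0 hfi
    refine tendsto_integral_of_dominated_convergence f (fun n => by fun_prop) hfi
      (fun n => .of_forall (bnd f hf0 n)) (.of_forall fun x => ?_)
    refine tendsto_const_nhds.congr' ?_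
    obtain ⟨N, hN⟩ := exists_nat_ge (f x)
    filter_upwards [Filter.eventually_ge_atTop N] with n hn
    rw [min_eq_left (hN.trans (by exact_mod_cast hn))]
  refine le_of_tendsto ((lim f hf hf0 hfi).mul (lim g hg hg0 hgi)) (.of_forall fun n => ?_)
  refine pl2 _ _ m (by fun_prop) (by fun_prop) (fun x => le_min (hf0 x) (by positivity))
    (fun x => le_min (hg0 x) (by positivity)) hm0 ⟨n, ?_⟩ ⟨n, ?_⟩ (ti f hf hf0 hfi n)
    (ti g hg hg0 hgi n) hmi fun x y => le_trans ?_ (h x y)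
  · rintro _ ⟨x, rfl⟩; exact min_le_right _ _
  · rintro _ ⟨x, rfl⟩; exact min_le_right _ _
  · exact mul_le_mul (min_le_left _ _) (min_le_left _ _) (le_min (hg0 y) (by positivity)) (hf0 x)

lemma exists_meas_le (f : ℝ → ℝ) (hf0 : ∀ x, 0 ≤ f x) (hfi : Integrable f) :
    ∃ f' : ℝ → ℝ, Measurable f' ∧ (∀ x, 0 ≤ f' x) ∧ (∀ x, f' x ≤ f x) ∧ f =ᵐ[volume] f' := by
  classical
  have hm := hfi.aemeasurable
  set N := toMeasurable volume {x | f x ≠ hm.mk f x} with hN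
  have hN0 : volume N = 0 := by rw [hN, measure_toMeasurable]; exact hm.ae_eq_mk
  have hNs : ∀ x, x ∉ N → f x = hm.mk f x := fun x hx => by
    by_contra hc; exact hx (subset_toMeasurable _ _ hc)
  refine ⟨Nᶜ.indicator (hm.mk f), hm.measurable_mk.indicator (measurableSet_toMeasurable _ _).compl,
    fun x => ?_, fun x => ?_, ?_⟩
  · by_cases hx : x ∈ N
    · simp [hx]
    · simp [hx, ← hNs x hx, hf0 x]
  · by_cases hx : x ∈ N
    · simp [hx, hf0 x]
    · simp [hx, ← hNs x hx]
  · have : ∀ᵐ x, x ∉ N := measure_eq_zero_iff_ae_notMem.1 hN0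
    filter_upwards [this] with x hx
    simp [hx, ← hNs x hx]

lemma pl4 (f g m : ℝ → ℝ)
    (hf0 : ∀ x, 0 ≤ f x) (hg0 : ∀ x, 0 ≤ g x) (hm0 : ∀ x, 0 ≤ m x)
    (hfi : Integrable f) (hgi : Integrable g) (hmi : Integrable m)
    (h : ∀ x y, f x * g y ≤ m ((x + y) / 2) ^ 2) :
    (∫ x, f x) * ∫ x, g x ≤ (∫ x, m x) ^ 2 := by
  obtain ⟨f', hf, hf0', hff, hfe⟩ := exists_meas_le f hf0 hfi
  obtain ⟨g', hg, hg0', hgg, hge⟩ := exists_meas_le g hg0 hgi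
  rw [integral_congr_ae hfe, integral_congr_ae hge]
  exact pl3 f' g' m hf hg hf0' hg0' hm0 (hfi.congr hfe) (hgi.congr hge) hmi fun x y =>
    (mul_le_mul (hff x) (hgg y) (hg0' y) (hf0 x)).trans (h x y)

lemma cov (F : ℝ → ℝ) (hF : IntegrableOn F (Ici 0)) :
    Integrable (fun x => Real.exp x * F (Real.exp x)) ∧
    ∫ t in Ici (0:ℝ), F t = ∫ x, Real.exp x * F (Real.exp x) := by
  have hd : ∀ x ∈ (univ : Set ℝ), HasDerivWithinAt Real.exp (Real.exp x) univ x :=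
    fun x _ => (Real.hasDerivAt_exp x).hasDerivWithinAt
  have hi : InjOn Real.exp univ := Real.exp_injective.injOn
  have e : Real.exp '' univ = Ioi 0 := by rw [image_univ, Real.range_exp]
  have h1 := integrableOn_image_iff_integrableOn_abs_deriv_smul MeasurableSet.univ hd hi F
  have h2 := integral_image_eq_integral_abs_deriv_smul MeasurableSet.univ hd hi F
  simp only [e, Real.abs_exp, smul_eq_mul, integrableOn_univ, Measure.restrict_univ] at h1 h2
  exact ⟨h1.1 (hF.mono_set Ioi_subset_Ici_self), by rw [integral_Ici_eq_integral_Ioi, h2]⟩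

/-- **Prékopa–Leindler inequality in multiplicative-variable (Borell–Ball) form.**
If `M, F, G : [0,∞) → [0,∞)` are integrable and `M(√(rs)) ≥ √(F(r)·G(s))` for all
`r, s ≥ 0`, then `∫₀^∞ M ≥ √(∫₀^∞ F · ∫₀^∞ G)`. -/
theorem prekopa_leindler_multiplicative (M F G : ℝ → ℝ)
    (hM0 : ∀ t, 0 ≤ t → 0 ≤ M t) (hF0 : ∀ t, 0 ≤ t → 0 ≤ F t)
    (hG0 : ∀ t, 0 ≤ t → 0 ≤ G t)
    (hMi : IntegrableOn M (Ici 0)) (hFi : IntegrableOn F (Ici 0))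
    (hGi : IntegrableOn G (Ici 0))
    (h : ∀ r s : ℝ, 0 ≤ r → 0 ≤ s →
      Real.sqrt (F r * G s) ≤ M (Real.sqrt (r * s))) :
    Real.sqrt ((∫ t in Ici (0:ℝ), F t) * ∫ t in Ici (0:ℝ), G t) ≤
      ∫ t in Ici (0:ℝ), M t := by
  obtain ⟨m1, m2⟩ := cov M hMi
  obtain ⟨f1, f2⟩ := cov F hFi
  obtain ⟨g1, g2⟩ := cov G hGi
  have p : ∀ F : ℝ → ℝ, (∀ t, 0 ≤ t → 0 ≤ F t) → ∀ x, 0 ≤ Real.exp x * F (Real.exp x) :=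
    fun F hF x => mul_nonneg (Real.exp_pos x).le (hF _ (Real.exp_pos x).le)
  rw [m2, f2, g2]
  refine Real.sqrt_le_iff.2 ⟨integral_nonneg (p M hM0), ?_⟩
  refine pl4 _ _ _ (p F hF0) (p G hG0) (p M hM0) f1 g1 m1 fun x y => ?_
  have hx := (Real.exp_pos x).le
  have hy := (Real.exp_pos y).le
  have h1 := h _ _ hx hy
  have e2 : Real.exp ((x + y) / 2) ^ 2 = Real.exp x * Real.exp y := by
    rw [← Real.exp_add, ← Real.exp_nat_mul]; congr 1; push_cast; ring
  have e3 : Real.sqrt (Real.exp x * Real.exp y) = Real.exp ((x + y) / 2) := by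
    rw [← e2, Real.sqrt_sq (Real.exp_pos _).le]
  rw [e3] at h1
  have h2 := (Real.sqrt_le_iff.1 h1).2
  rw [mul_pow, e2]
  calc _ = Real.exp x * Real.exp y * (F (Real.exp x) * G (Real.exp y)) := by ring
    _ ≤ _ := mul_le_mul_of_nonneg_left h2 (by positivity)
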